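/- Let m ≥ 1, let l ≥ 2 be an even integer, let 0 ≤ s ≤ 2m-1, and set d = (2^{2lm}-1)/(2^m+1) + 2^s; assume gcd(d, 2^{2lm}-1) = 1. Then the set of values { S_d(z) : z ∈ GF(2^{2lm}), z ≠ 0 } has at least four elements (equivalently, the cross correlation between a binary m-sequence of period 2^{2lm}-1 and its d-decimation takes at least four distinct values). -/

import Mathlib

noncomputable instance (p n : ℕ) [Fact p.Prime] : Fintype (GaloisField p n) :=
  Fintype.ofFinite _

/-- The Weil sum `S_d(z) = ∑_{x ∈ GF(2^n)} (-1)^{Tr(zx + x^d)}`, where `Tr` is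
the absolute trace from `GF(2^n)` to `GF(2)`. -/
noncomputable def binaryWeilSum (n d : ℕ) (z : GaloisField 2 n) : ℤ :=
  ∑ x : GaloisField 2 n,
    (-1 : ℤ) ^ (Algebra.trace (ZMod 2) (GaloisField 2 n) (z * x + x ^ d)).val

/-! Put `q = 2 ^ m` and `N = (q ^ (2 * l) - 1) / (q + 1)`. For `x ≠ 0` the power `x ^ N` lies on the
unit circle `U = {u | u ^ (q + 1) = 1}`, and sorting the terms of the Weil sum by `x ^ N` expresses
it through the Gaussian periods of order `N`. The quadratic form `Tr (a * x ^ (q + 1))` is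
nondegenerate unless `a ^ N = 1`, which forces all periods but one to be equal to
`r = (q ^ l - 1) / (q + 1)`. Hence the Weil sum at `z` is `q ^ l * (1 + r - c z)` on `U` and
`q ^ l * (1 - c z)` off `U`, where `c z` counts the `w ∈ U` with `w ^ 2 ^ s * (z + w) ^ N = 1`.

For `z ∈ U` this condition on `w` reads `w ^ 2 ^ s = (z * w) ^ l` and `w ≠ z`, so the `q + 1` counts
over `U` add up to `q`. One of them is therefore `0`, and by a divisibility argument another one is
neither `0` nor `r`; this gives two nonnegative values different from `q ^ l`. By the first two
moments, the Weil sums off `U` add up to zero without all vanishing, so `q ^ l` and a negative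
value occur there. -/

open Finset Polynomial

section PowerMap

variable {F : Type*} [Field F] [Fintype F] {N k : ℕ}

theorem exists_isPrimitiveRoot_card_sub_one (F : Type*) [Field F] [Fintype F] :
    ∃ ζ : F, IsPrimitiveRoot ζ (Fintype.card F - 1) := by
  obtain ⟨g, hg⟩ := IsCyclic.exists_ofOrder_eq_natCard (α := Fˣ)
  rw [Nat.card_units, Nat.card_eq_fintype_card] at hg
  exact ⟨g, IsPrimitiveRoot.coe_units_iff.2 (hg ▸ IsPrimitiveRoot.orderOf g)⟩

theorem pos_of_mul_eq_card_sub_one (hN : N * k = Fintype.card F - 1) : 0 < N ∧ 0 < k := by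
  have : 0 < N * k := hN ▸ Nat.sub_pos_of_lt Fintype.one_lt_card
  exact ⟨Nat.pos_of_mul_pos_right this, Nat.pos_of_mul_pos_left this⟩

theorem exists_pow_eq_of_pow_eq_one (hN : N * k = Fintype.card F - 1) {u : F} (hu : u ^ N = 1) :
    ∃ c : F, c ^ k = u := by
  obtain ⟨hN0, hk0⟩ := pos_of_mul_eq_card_sub_one hN
  obtain ⟨ζ, hζ⟩ := exists_isPrimitiveRoot_card_sub_one F
  have : NeZero N := ⟨hN0.ne'⟩
  obtain ⟨i, -, rfl⟩ := (hζ.pow (hN ▸ Nat.mul_pos hN0 hk0)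
    (hN.symm.trans (mul_comm N k))).eq_pow_of_pow_eq_one hu
  exact ⟨ζ ^ i, pow_right_comm ζ i k⟩

theorem card_nthRootsFinset_of_pow_eq_one (hN : N * k = Fintype.card F - 1) {u : F}
    (hu : u ^ N = 1) : #(nthRootsFinset k u) = k := by
  classical
  obtain ⟨hN0, hk0⟩ := pos_of_mul_eq_card_sub_one hN
  obtain ⟨ζ, hζ⟩ := exists_isPrimitiveRoot_card_sub_one F
  have hη : IsPrimitiveRoot (ζ ^ N) k := hζ.pow (hN ▸ Nat.mul_pos hN0 hk0) hN.symm
  have hu0 : u ≠ 0 := by rintro rfl; simp [hN0.ne'] at hu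
  rw [nthRootsFinset_def, Multiset.toFinset_card_of_nodup (hη.nthRoots_nodup hu0),
    hη.card_nthRoots, if_pos (exists_pow_eq_of_pow_eq_one hN hu)]

theorem sum_eq_add_sum_nthRootsFinset {A : Type*} [AddCommMonoid A]
    (hN : N * k = Fintype.card F - 1) (f : F → A) :
    ∑ x, f x = f 0 + ∑ u ∈ nthRootsFinset k (1 : F), ∑ x ∈ nthRootsFinset N u, f x := by
  classical
  obtain ⟨hN0, hk0⟩ := pos_of_mul_eq_card_sub_one hN
  have hmaps : ∀ x ∈ univ.erase (0 : F), x ^ N ∈ nthRootsFinset k (1 : F) := fun x hx ↦ by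
    rw [mem_nthRootsFinset hk0, ← pow_mul, hN,
      FiniteField.pow_card_sub_one_eq_one x (ne_of_mem_erase hx)]
  rw [← add_sum_erase _ f (mem_univ 0), ← sum_fiberwise_of_maps_to hmaps]
  congr 1
  refine sum_congr rfl fun u hu ↦ sum_congr ?_ fun _ _ ↦ rfl
  ext x
  have hu0 : u ≠ 0 := ne_zero_of_mem_nthRootsFinset one_ne_zero hu
  simp only [mem_filter, mem_erase, mem_univ, and_true, mem_nthRootsFinset hN0,
    and_iff_right_iff_imp]
  rintro rfl rfl
  exact hu0 (zero_pow hN0.ne')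

theorem sum_comp_pow {A : Type*} [AddCommMonoid A] (hN : N * k = Fintype.card F - 1) (f : F → A) :
    ∑ x, f (x ^ k) = f 0 + k • ∑ u ∈ nthRootsFinset N (1 : F), f u := by
  obtain ⟨hN0, hk0⟩ := pos_of_mul_eq_card_sub_one hN
  rw [sum_eq_add_sum_nthRootsFinset ((mul_comm k N).trans hN), zero_pow hk0.ne', smul_sum]
  congr 1
  refine sum_congr rfl fun u hu ↦ ?_
  rw [sum_congr rfl fun x hx ↦ congrArg f ((mem_nthRootsFinset hk0 u).1 hx), sum_const,
    card_nthRootsFinset_of_pow_eq_one hN ((mem_nthRootsFinset hN0 1).1 hu)]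

theorem eq_one_of_pow_eq_one_of_coprime_card_sub_one (hk : k.Coprime (Fintype.card F - 1)) {x : F}
    (hx : x ≠ 0) (h : x ^ k = 1) : x = 1 :=
  orderOf_eq_one_iff.1 <| Nat.eq_one_of_dvd_coprimes hk (orderOf_dvd_of_pow_eq_one h)
    (orderOf_dvd_of_pow_eq_one (FiniteField.pow_card_sub_one_eq_one x hx))

theorem pow_left_injective_of_coprime_card_sub_one (hk0 : k ≠ 0)
    (hk : k.Coprime (Fintype.card F - 1)) : Function.Injective fun x : F ↦ x ^ k := by
  intro x y (hxy : x ^ k = y ^ k)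
  rcases eq_or_ne y 0 with rfl | hy
  · rwa [zero_pow hk0, pow_eq_zero_iff hk0] at hxy
  have hx : x ≠ 0 := by rintro rfl; exact pow_ne_zero k hy (hxy ▸ zero_pow hk0)
  have hdiv : (x / y) ^ k = 1 := by rw [div_pow, hxy, div_self (pow_ne_zero k hy)]
  exact (div_eq_one_iff_eq hy).1
    (eq_one_of_pow_eq_one_of_coprime_card_sub_one hk (div_ne_zero hx hy) hdiv)

end PowerMap

section GaussPeriod

variable {F : Type*} [Field F] {R : Type*} [CommRing R] {N k : ℕ}

theorem sum_nthRootsFinset_mul_left {A : Type*} [AddCommMonoid A] {a : F} (ha : a ≠ 0) (u : F)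
    (f : F → A) :
    ∑ x ∈ nthRootsFinset N u, f (a * x) = ∑ x ∈ nthRootsFinset N (a ^ N * u), f x := by
  rcases N.eq_zero_or_pos with rfl | hN
  · simp
  refine sum_nbij' (a * ·) (a⁻¹ * ·) (fun x hx ↦ ?_) (fun x hx ↦ ?_)
    (fun x _ ↦ inv_mul_cancel_left₀ ha x) (fun x _ ↦ mul_inv_cancel_left₀ ha x) fun _ _ ↦ rfl
  · rw [mem_nthRootsFinset hN] at hx ⊢
    rw [mul_pow, hx]
  · rw [mem_nthRootsFinset hN] at hx ⊢
    rw [mul_pow, hx, inv_pow, inv_mul_cancel_left₀ (pow_ne_zero N ha)]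

/-- The Gaussian period of order `N` at `u`: the sum of the additive character `ψ` over the coset
`{x | x ^ N = u}` of the group of `N`-th roots of unity. -/
noncomputable def gaussPeriod (ψ : AddChar F R) (N : ℕ) (u : F) : R :=
  ∑ x ∈ nthRootsFinset N u, ψ x

variable [Fintype F]

theorem sum_apply_mul_pow (ψ : AddChar F R) (hN : N * k = Fintype.card F - 1) {a : F}
    (ha : a ≠ 0) : ∑ y, ψ (a * y ^ k) = 1 + k * gaussPeriod ψ N (a ^ N) := by
  rw [sum_comp_pow hN fun x ↦ ψ (a * x), mul_zero, AddChar.map_zero_eq_one,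
    sum_nthRootsFinset_mul_left ha, mul_one, nsmul_eq_mul, gaussPeriod]

theorem sum_gaussPeriod [IsDomain R] {ψ : AddChar F R} (hψ : ψ ≠ 1)
    (hN : N * k = Fintype.card F - 1) :
    ∑ u ∈ nthRootsFinset k (1 : F), gaussPeriod ψ N u = -1 := by
  have h := AddChar.sum_eq_zero_of_ne_one hψ
  rw [sum_eq_add_sum_nthRootsFinset hN, AddChar.map_zero_eq_one] at h
  exact eq_neg_of_add_eq_zero_right h

end GaussPeriod

section WeilSum

variable {F : Type*} [Field F] [Fintype F] {R : Type*} [CommRing R] {d : ℕ}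

/-- The Weil sum of the binomial `z x + x ^ d` with respect to the additive character `ψ`, that is,
the Walsh transform of `x ↦ x ^ d` at `z`. -/
noncomputable def weilSum (ψ : AddChar F R) (d : ℕ) (z : F) : R :=
  ∑ x, ψ (z * x + x ^ d)

variable [IsDomain R] {ψ : AddChar F R}

theorem weilSum_zero (hψ : ψ ≠ 1) (hd0 : d ≠ 0) (hd : d.Coprime (Fintype.card F - 1)) :
    weilSum ψ d 0 = 0 := by
  have hbij : Function.Bijective fun x : F ↦ x ^ d :=
    Finite.injective_iff_bijective.1 (pow_left_injective_of_coprime_card_sub_one hd0 hd)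
  simp only [weilSum, zero_mul, zero_add]
  rw [hbij.sum_comp (fun x ↦ ψ x), AddChar.sum_eq_zero_of_ne_one hψ]

theorem sum_weilSum (hψ : ψ ≠ 1) (hd0 : d ≠ 0) : ∑ z, weilSum ψ d z = Fintype.card F := by
  classical
  simp only [weilSum]
  rw [sum_comm]
  simp only [AddChar.map_add_eq_mul, ← sum_mul,
    AddChar.sum_mulShift _ (AddChar.IsPrimitive.of_ne_one hψ), Nat.cast_ite, Nat.cast_zero,
    ite_mul, zero_mul, sum_ite_eq', mem_univ, if_true, zero_pow hd0, AddChar.map_zero_eq_one,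
    mul_one]

theorem sum_weilSum_mul_weilSum_inv (hψ : ψ ≠ 1) (d : ℕ) :
    ∑ z, weilSum ψ d z * weilSum ψ⁻¹ d z = (Fintype.card F : R) ^ 2 := by
  classical
  have hexpand (z : F) : weilSum ψ d z * weilSum ψ⁻¹ d z =
      ∑ x, ∑ y, ψ (z * (x - y)) * ψ (x ^ d - y ^ d) := by
    simp only [weilSum, sum_mul_sum, AddChar.inv_apply, ← AddChar.map_add_eq_mul]
    refine sum_congr rfl fun x _ ↦ sum_congr rfl fun y _ ↦ congrArg ψ ?_
    ring
  have hinner (x : F) :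
      ∑ z, ∑ y, ψ (z * (x - y)) * ψ (x ^ d - y ^ d) = (Fintype.card F : R) := by
    rw [sum_comm]
    simp only [← sum_mul, AddChar.sum_mulShift _ (AddChar.IsPrimitive.of_ne_one hψ), sub_eq_zero,
      Nat.cast_ite, Nat.cast_zero, ite_mul, zero_mul, sum_ite_eq, mem_univ, if_true, sub_self,
      AddChar.map_zero_eq_one, mul_one]
  simp only [hexpand]
  rw [sum_comm]
  simp only [hinner, sum_const, card_univ, nsmul_eq_mul, sq]

end WeilSum

section CharTwo

theorem addChar_pow_two_pow {S M : Type*} [Semiring S] [Monoid M] {ψ : AddChar S M}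
    (hfrob : ∀ x, ψ (x ^ 2) = ψ x) (k : ℕ) (x : S) : ψ (x ^ 2 ^ k) = ψ x := by
  induction k with
  | zero => rw [pow_zero, pow_one]
  | succ k ih => rw [pow_succ, pow_mul, hfrob, ih]

theorem pow_two_pow_bijective {F : Type*} [Field F] [Finite F] [CharP F 2] (k : ℕ) :
    Function.Bijective fun x : F ↦ x ^ 2 ^ k :=
  (iterateFrobeniusEquiv F 2 k).bijective

variable {F : Type*} [Field F] [Fintype F] [CharP F 2] {R : Type*} [CommRing R]
  [IsDomain R] {ψ : AddChar F R} {m : ℕ}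

theorem sum_weilSum_sq (hψ : ψ ≠ 1) (d : ℕ) :
    ∑ z, weilSum ψ d z ^ 2 = (Fintype.card F : R) ^ 2 := by
  have hinv : ψ⁻¹ = ψ := by ext x; rw [AddChar.inv_apply, CharTwo.neg_eq]
  rw [← sum_weilSum_mul_weilSum_inv hψ d, hinv]
  simp only [sq]

theorem sum_apply_mul_polar (hψ : ψ ≠ 1) (hfrob : ∀ x, ψ (x ^ 2) = ψ x) (m : ℕ) (a v : F)
    [Decidable (a ^ 2 ^ m * v ^ (2 ^ m) ^ 2 = a * v)] :
    ∑ y, ψ (a * (v ^ 2 ^ m * y + v * y ^ 2 ^ m)) =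
      if a ^ 2 ^ m * v ^ (2 ^ m) ^ 2 = a * v then (Fintype.card F : R) else 0 := by
  classical
  have hterm (y : F) : ψ (a * (v ^ 2 ^ m * y + v * y ^ 2 ^ m)) =
      ψ (y ^ 2 ^ m * (a ^ 2 ^ m * v ^ (2 ^ m) ^ 2 + a * v)) := by
    rw [mul_add a, AddChar.map_add_eq_mul, ← addChar_pow_two_pow hfrob m (a * (v ^ 2 ^ m * y)),
      ← AddChar.map_add_eq_mul]
    congr 1
    ring
  simp only [hterm]
  rw [(pow_two_pow_bijective m).sum_comp fun y ↦ ψ (y * (a ^ 2 ^ m * v ^ (2 ^ m) ^ 2 + a * v)),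
    AddChar.sum_mulShift _ (AddChar.IsPrimitive.of_ne_one hψ)]
  simp only [CharTwo.add_eq_zero, Nat.cast_ite, Nat.cast_zero]

theorem sq_sum_apply_mul_pow_succ (hψ : ψ ≠ 1) (hfrob : ∀ x, ψ (x ^ 2) = ψ x) {a : F}
    (hker : ∀ v, a ^ 2 ^ m * v ^ (2 ^ m) ^ 2 = a * v → v = 0) :
    (∑ y, ψ (a * y ^ (2 ^ m + 1))) ^ 2 = (Fintype.card F : R) := by
  classical
  have hexpand (v y : F) : ψ (a * (v + y) ^ (2 ^ m + 1)) * ψ (a * y ^ (2 ^ m + 1)) =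
      ψ (a * v ^ (2 ^ m + 1)) * ψ (a * (v ^ 2 ^ m * y + v * y ^ 2 ^ m)) := by
    rw [← AddChar.map_add_eq_mul, ← AddChar.map_add_eq_mul, pow_succ (v + y), add_pow_char_pow]
    congr 1
    linear_combination a * y ^ (2 ^ m + 1) * CharTwo.two_eq_zero (R := F)
  have hker' (v : F) : a ^ 2 ^ m * v ^ (2 ^ m) ^ 2 = a * v ↔ v = 0 :=
    ⟨hker v, by rintro rfl; simp⟩
  calc (∑ y, ψ (a * y ^ (2 ^ m + 1))) ^ 2
      = ∑ y, ∑ v, ψ (a * (v + y) ^ (2 ^ m + 1)) * ψ (a * y ^ (2 ^ m + 1)) := by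
        rw [sq, sum_mul_sum, sum_comm]
        refine sum_congr rfl fun y _ ↦ ?_
        exact (Fintype.sum_equiv (Equiv.addRight y) _ _ fun _ ↦ rfl).symm
    _ = ∑ v, ψ (a * v ^ (2 ^ m + 1)) * ∑ y, ψ (a * (v ^ 2 ^ m * y + v * y ^ 2 ^ m)) := by
        rw [sum_comm]
        simp only [hexpand, mul_sum]
    _ = Fintype.card F := by
        simp only [sum_apply_mul_polar hψ hfrob, hker', mul_ite, mul_zero, sum_ite_eq', mem_univ,
          if_true, ne_eq, Nat.succ_ne_zero, not_false_eq_true, zero_pow,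
          AddChar.map_zero_eq_one, one_mul]

end CharTwo

section UnitCircle

variable {F : Type*} [Field F] {q N : ℕ}

/-- The unit circle of `F` relative to `q`: the solutions of `w ^ (q + 1) = 1`, on which `w ↦ w ^ q`
is inversion. -/
noncomputable abbrev unitCircle (F : Type*) [Field F] (q : ℕ) : Finset F :=
  nthRootsFinset (q + 1) 1

theorem mem_unitCircle {w : F} : w ∈ unitCircle F q ↔ w ^ (q + 1) = 1 :=
  mem_nthRootsFinset q.succ_pos 1

variable [Fintype F]

theorem card_unitCircle (hN : N * (q + 1) = Fintype.card F - 1) : #(unitCircle F q) = q + 1 :=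
  card_nthRootsFinset_of_pow_eq_one hN (one_pow N)

theorem pow_eq_one_of_pow_mul_pow_sq_eq (hqN : q - 1 ∣ N) (hN : N * (q + 1) = Fintype.card F - 1)
    {a v : F} (ha : a ≠ 0) (hv : v ≠ 0) (h : a ^ q * v ^ q ^ 2 = a * v) : a ^ N = 1 := by
  have hc0 : a * v ^ (q + 1) ≠ 0 := mul_ne_zero ha (pow_ne_zero _ hv)
  have hcq : (a * v ^ (q + 1)) ^ q = a * v ^ (q + 1) := by
    linear_combination v ^ q * h
  have hc : (a * v ^ (q + 1)) ^ N = 1 := by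
    refine orderOf_dvd_iff_pow_eq_one.1 ((orderOf_dvd_of_pow_eq_one ?_).trans hqN)
    rcases q.eq_zero_or_pos with rfl | hq
    · simp
    · exact mul_right_cancel₀ hc0 (by rw [pow_sub_one_mul hq.ne', hcq, one_mul])
  rwa [mul_pow, ← pow_mul, mul_comm (q + 1), hN, FiniteField.pow_card_sub_one_eq_one v hv,
    mul_one] at hc

variable [CharP F 2] {ψ : AddChar F ℤ} {m r Q : ℕ}

theorem gaussPeriod_of_ne_one (hψ : ψ ≠ 1) (hfrob : ∀ x, ψ (x ^ 2) = ψ x) (hq : q = 2 ^ m)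
    (hm : m ≠ 0) (hqN : q - 1 ∣ N) (hN : N * (q + 1) = Fintype.card F - 1)
    (hcard : Fintype.card F = Q ^ 2) (hr : r * (q + 1) + 1 = Q) {u : F} (hu : u ∈ unitCircle F q)
    (hu1 : u ≠ 1) : gaussPeriod ψ N u = r := by
  obtain ⟨a, rfl⟩ := exists_pow_eq_of_pow_eq_one ((mul_comm _ _).trans hN)
    (mem_unitCircle.1 hu)
  have ha : a ≠ 0 := by
    rintro rfl
    simp [(pos_of_mul_eq_card_sub_one hN).1.ne'] at hu
  have hker (v : F) (hv : a ^ q * v ^ q ^ 2 = a * v) : v = 0 := by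
    by_contra hv0
    exact hu1 (pow_eq_one_of_pow_mul_pow_sq_eq hqN hN ha hv0 hv)
  have hsq : (1 + (q + 1 : ℕ) * gaussPeriod ψ N (a ^ N)) ^ 2 = (Q : ℤ) ^ 2 := by
    rw [← sum_apply_mul_pow ψ hN ha]
    subst hq
    rw [sq_sum_apply_mul_pow_succ hψ hfrob hker, hcard, Nat.cast_pow]
  have hq2 : 2 ≤ q := hq ▸ Nat.pow_le_pow_right two_pos (Nat.one_le_iff_ne_zero.2 hm)
  subst hr
  push_cast at hsq
  rcases sq_eq_sq_iff_eq_or_eq_neg.1 hsq with h | h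
  · exact mul_left_cancel₀ (by positivity : (q + 1 : ℤ) ≠ 0) (by linear_combination h)
  · have hdvd : (q + 1 : ℤ) ∣ 2 := ⟨-(gaussPeriod ψ N (a ^ N) + r), by linear_combination h⟩
    have := Int.le_of_dvd two_pos hdvd
    omega

theorem gaussPeriod_one (hψ : ψ ≠ 1) (hfrob : ∀ x, ψ (x ^ 2) = ψ x) (hq : q = 2 ^ m)
    (hm : m ≠ 0) (hqN : q - 1 ∣ N) (hN : N * (q + 1) = Fintype.card F - 1)
    (hcard : Fintype.card F = Q ^ 2) (hr : r * (q + 1) + 1 = Q) :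
    gaussPeriod ψ N (1 : F) = r - Q := by
  classical
  have hone : (1 : F) ∈ unitCircle F q := by simp
  have h := sum_gaussPeriod hψ hN
  rw [← add_sum_erase _ _ hone, sum_congr rfl fun u hu ↦ gaussPeriod_of_ne_one hψ hfrob hq hm hqN hN
    hcard hr (mem_of_mem_erase hu) (ne_of_mem_erase hu), sum_const, card_erase_of_mem hone,
    card_unitCircle hN, Nat.add_sub_cancel, nsmul_eq_mul] at h
  subst hr
  push_cast
  linear_combination h

end UnitCircle

section UnitCircleCount

variable {F : Type*} [Field F] {q N s r Q : ℕ}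

open Classical in
/-- The number of points `w` of the unit circle with `w ^ t * (z + w) ^ N = 1`. Up to an affine
normalization these numbers are the values of the Weil sum with exponent `N + t`. -/
noncomputable def unitCircleCount (q N t : ℕ) (z : F) : ℕ :=
  #{w ∈ unitCircle F q | w ^ t * (z + w) ^ N = 1}

theorem pow_two_pow_mem_unitCircle [CharP F 2] {w : F} :
    w ^ 2 ^ s ∈ unitCircle F q ↔ w ∈ unitCircle F q := by
  rw [mem_unitCircle, mem_unitCircle, pow_right_comm]
  exact ⟨fun h ↦ iterateFrobenius_inj F 2 s (h.trans (one_pow _).symm), fun h ↦ by rw [h, one_pow]⟩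

theorem sum_unitCircle_pow_two_pow [CharP F 2] [Finite F] {A : Type*} [AddCommMonoid A] (s : ℕ)
    (f : F → A) : ∑ w ∈ unitCircle F q, f (w ^ 2 ^ s) = ∑ u ∈ unitCircle F q, f u :=
  sum_equiv (iterateFrobeniusEquiv F 2 s).toEquiv (fun _ ↦ pow_two_pow_mem_unitCircle.symm)
    fun _ _ ↦ rfl

variable [Fintype F]

theorem weilSum_eq_one_add_sum_unitCircle [CharP F 2] {R : Type*} [CommRing R] {ψ : AddChar F R}
    (hfrob : ∀ x, ψ (x ^ 2) = ψ x) (hN : N * (q + 1) = Fintype.card F - 1) (s : ℕ) (z : F) :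
    weilSum ψ (N + 2 ^ s) z =
      1 + ∑ w ∈ unitCircle F q, ∑ x ∈ nthRootsFinset N (w ^ 2 ^ s), ψ ((z + w) * x) := by
  have hN0 := (pos_of_mul_eq_card_sub_one hN).1
  rw [weilSum, sum_eq_add_sum_nthRootsFinset hN, ← sum_unitCircle_pow_two_pow s]
  congr 1
  · rw [mul_zero, zero_pow (by positivity), add_zero, AddChar.map_zero_eq_one]
  · refine sum_congr rfl fun w _ ↦ sum_congr rfl fun x hx ↦ ?_
    rw [pow_add, (mem_nthRootsFinset hN0 _).1 hx, ← mul_pow, AddChar.map_add_eq_mul,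
      addChar_pow_two_pow hfrob, ← AddChar.map_add_eq_mul, add_mul]

variable [CharP F 2] {ψ : AddChar F ℤ}

open Classical in
theorem sum_nthRootsFinset_apply_add_mul (hN : N * (q + 1) = Fintype.card F - 1)
    (hNr : N = r * (Q + 1))
    (hη : ∀ u ∈ unitCircle F q, gaussPeriod ψ N u = r - if u = 1 then (Q : ℤ) else 0)
    (s : ℕ) (z : F) {w : F} (hw : w ∈ unitCircle F q) :
    ∑ x ∈ nthRootsFinset N (w ^ 2 ^ s), ψ ((z + w) * x) =
      r - (if w ^ 2 ^ s * (z + w) ^ N = 1 then (Q : ℤ) else 0)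
        + if z = w then (r * Q : ℤ) else 0 := by
  have hroot : (w ^ 2 ^ s) ^ (q + 1) = 1 := mem_unitCircle.1 (pow_two_pow_mem_unitCircle.2 hw)
  rcases eq_or_ne z w with rfl | hzw
  · simp only [CharTwo.add_self_eq_zero, zero_mul, AddChar.map_zero_eq_one, sum_const,
      card_nthRootsFinset_of_pow_eq_one ((mul_comm _ _).trans hN) hroot,
      zero_pow (pos_of_mul_eq_card_sub_one hN).1.ne', mul_zero, zero_ne_one, if_false, if_true,
      nsmul_one, sub_zero]
    exact_mod_cast hNr.trans (by ring)
  · have hzw0 : z + w ≠ 0 := fun h ↦ hzw (CharTwo.add_eq_zero.1 h)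
    have hmem : (z + w) ^ N * w ^ 2 ^ s ∈ unitCircle F q := by
      rw [mem_unitCircle, mul_pow, hroot, ← pow_mul, hN,
        FiniteField.pow_card_sub_one_eq_one _ hzw0, one_mul]
    rw [sum_nthRootsFinset_mul_left hzw0, ← gaussPeriod, hη _ hmem, if_neg hzw, add_zero, mul_comm]

open Classical in
theorem weilSum_eq_mul_sub_unitCircleCount (hfrob : ∀ x, ψ (x ^ 2) = ψ x)
    (hN : N * (q + 1) = Fintype.card F - 1) (hNr : N = r * (Q + 1)) (hr : r * (q + 1) + 1 = Q)
    (hη : ∀ u ∈ unitCircle F q, gaussPeriod ψ N u = r - if u = 1 then (Q : ℤ) else 0)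
    (s : ℕ) (z : F) :
    weilSum ψ (N + 2 ^ s) z =
      Q * (1 + (if z ∈ unitCircle F q then (r : ℤ) else 0) - unitCircleCount q N (2 ^ s) z) := by
  have hsum := sum_congr rfl fun w hw ↦ sum_nthRootsFinset_apply_add_mul hN hNr hη s z hw
  rw [weilSum_eq_one_add_sum_unitCircle hfrob hN, hsum, sum_add_distrib, sum_sub_distrib,
    sum_const, card_unitCircle hN, ← sum_filter, sum_const, ← unitCircleCount, sum_ite_eq,
    nsmul_eq_mul, nsmul_eq_mul, ← hr]
  split_ifs <;> push_cast <;> ring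

end UnitCircleCount

section Counting

theorem eq_sub_one_mul_geom_sum {q N l : ℕ} (hq : 0 < q) (hN : N * (q + 1) = (q ^ 2) ^ l - 1) :
    N = (q - 1) * ∑ i ∈ range l, (q ^ 2) ^ i := by
  refine Nat.eq_of_mul_eq_mul_right q.succ_pos ?_
  rw [hN, ← geom_sum_mul_of_one_le (Nat.one_le_pow 2 q hq), ← one_pow 2, Nat.sq_sub_sq, one_pow,
    Nat.succ_eq_add_one]
  ring

variable {F : Type*} [Field F] {q N l m s t : ℕ}

theorem pow_eq_pow_pow_sub_one (hq : 0 < q) (hN : N * (q + 1) = (q ^ 2) ^ l - 1) {x : F}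
    (hx : x ^ q ^ 2 = x) : x ^ N = (x ^ l) ^ (q - 1) := by
  have hfix (i : ℕ) : x ^ (q ^ 2) ^ i = x := by
    induction i with
    | zero => rw [pow_zero, pow_one]
    | succ i ih => rw [pow_succ, pow_mul, ih, hx]
  rw [eq_sub_one_mul_geom_sum hq hN, mul_comm, pow_mul, ← prod_pow_eq_pow_sum,
    prod_congr rfl fun i _ ↦ hfix i, prod_const, card_range]

theorem pow_sq_eq_self_of_mem_unitCircle {z : F} (hz : z ∈ unitCircle F q) : z ^ q ^ 2 = z := by
  rw [mem_unitCircle] at hz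
  have hz0 : z ^ q ≠ 0 := fun h ↦ by simp [pow_succ, h] at hz
  refine mul_right_cancel₀ hz0 ?_
  rw [sq, pow_mul, ← mul_pow, ← pow_succ, ← pow_succ', hz, one_pow]

theorem pow_mul_mul_self_pow_eq_one (hq : 0 < q) (hN : N * (q + 1) = (q ^ 2) ^ l - 1) {z : F}
    (hz : z ∈ unitCircle F q) : z ^ N * (z * z) ^ l = 1 := by
  rw [pow_eq_pow_pow_sub_one hq hN (pow_sq_eq_self_of_mem_unitCircle hz), ← pow_mul, ← sq,
    ← pow_mul, ← pow_add, (by rw [add_comm, mul_comm 2, ← mul_add]; congr 1; omega :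
      l * (q - 1) + 2 * l = l * (q + 1)), mul_comm l, pow_mul, mem_unitCircle.1 hz, one_pow]

theorem add_pow_mul_mul_pow_eq_one [CharP F 2] (hq : q = 2 ^ m)
    (hN : N * (q + 1) = (q ^ 2) ^ l - 1) {z w : F} (hz : z ∈ unitCircle F q)
    (hw : w ∈ unitCircle F q) (hzw : z ≠ w) : (z + w) ^ N * (z * w) ^ l = 1 := by
  have hq0 : 0 < q := hq ▸ Nat.two_pow_pos m
  have hadd (x y : F) : (x + y) ^ q = x ^ q + y ^ q := hq ▸ add_pow_char_pow x y 2 m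
  have hfix : (z + w) ^ q ^ 2 = z + w := by
    rw [sq, pow_mul, hadd, hadd, ← pow_mul, ← pow_mul, ← sq, pow_sq_eq_self_of_mem_unitCircle hz,
      pow_sq_eq_self_of_mem_unitCircle hw]
  have hconj : (z + w) ^ q * (z * w) = z + w := by
    rw [mem_unitCircle] at hz hw
    rw [hadd]
    linear_combination w * hz + z * hw
  have hunit : (z + w) ^ (q - 1) * (z * w) = 1 := by
    refine mul_right_cancel₀ (fun h ↦ hzw (CharTwo.add_eq_zero.1 h) : z + w ≠ 0) ?_
    rw [mul_right_comm, pow_sub_one_mul hq0.ne', hconj, one_mul]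
  rw [pow_eq_pow_pow_sub_one hq0 hN hfix, pow_right_comm, ← mul_pow, hunit, one_pow]

open Classical in
theorem unitCircleCount_of_mem [CharP F 2] (hq : q = 2 ^ m)
    (hN : N * (q + 1) = (q ^ 2) ^ l - 1) (hN0 : N ≠ 0) (t : ℕ) {z : F} (hz : z ∈ unitCircle F q) :
    unitCircleCount q N t z = #{w ∈ (unitCircle F q).erase z | w ^ t = (z * w) ^ l} := by
  rw [unitCircleCount]
  congr 1
  ext w
  simp only [mem_filter, mem_erase, ne_eq]
  rcases eq_or_ne w z with rfl | hwz
  · simp [CharTwo.add_self_eq_zero, hN0]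
  simp only [hwz, not_false_eq_true, true_and, and_congr_right_iff]
  intro hw
  have h := add_pow_mul_mul_pow_eq_one hq hN hz hw hwz.symm
  rw [← h, mul_comm]
  exact mul_right_inj' (left_ne_zero_of_mul_eq_one h)

theorem unitCircleCount_le [CharP F 2] [Fintype F] (hq : q = 2 ^ m)
    (hN : N * (q + 1) = (q ^ 2) ^ l - 1) (hcard : Fintype.card F = (q ^ 2) ^ l)
    (t : ℕ) {z : F} (hz : z ∈ unitCircle F q) : unitCircleCount q N t z ≤ q := by
  classical
  have hN' : N * (q + 1) = Fintype.card F - 1 := hcard ▸ hN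
  rw [unitCircleCount_of_mem hq hN (pos_of_mul_eq_card_sub_one hN').1.ne' t hz]
  exact (card_filter_le _ _).trans_eq
    (by rw [card_erase_of_mem hz, card_unitCircle hN', Nat.add_sub_cancel])

open Classical in
theorem sum_card_pow_eq_mul_pow [CharP F 2] [Finite F] (q s l : ℕ) :
    ∑ z ∈ unitCircle F q, #{w ∈ unitCircle F q | w ^ 2 ^ s = (z * w) ^ l} = #(unitCircle F q) := by
  have hmul {v w : F} (hv : v ∈ unitCircle F q) (hw : w ∈ unitCircle F q) :
      v * w ∈ unitCircle F q := by
    rw [mem_unitCircle] at hv hw ⊢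
    rw [mul_pow, hv, hw, one_mul]
  rw [← card_sigma]
  refine card_bij (fun p _ ↦ p.1 * p.2) ?_ ?_ ?_
  · rintro ⟨z, w⟩ h
    simp only [mem_sigma, mem_filter] at h
    exact hmul h.1 h.2.1
  · rintro ⟨z, w⟩ h ⟨z', w'⟩ h' (hv : z * w = z' * w')
    simp only [mem_sigma, mem_filter] at h h'
    obtain rfl : w = w' := iterateFrobenius_inj F 2 s (h.2.2.trans (hv ▸ h'.2.2.symm))
    rw [mul_right_cancel₀ (ne_zero_of_mem_nthRootsFinset one_ne_zero h.2.1) hv]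
  · intro v hv
    obtain ⟨w, hw : w ^ 2 ^ s = v ^ l⟩ := (pow_two_pow_bijective s).2 (v ^ l)
    have hwU : w ∈ unitCircle F q := by
      rw [← pow_two_pow_mem_unitCircle (s := s), hw, mem_unitCircle, pow_right_comm,
        mem_unitCircle.1 hv, one_pow]
    have hw0 : w ≠ 0 := ne_zero_of_mem_nthRootsFinset one_ne_zero hwU
    have hinv : w⁻¹ ∈ unitCircle F q := by
      rw [mem_unitCircle, inv_pow, mem_unitCircle.1 hwU, inv_one]
    refine ⟨⟨v * w⁻¹, w⟩, ?_, inv_mul_cancel_right₀ hw0 v⟩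
    simp only [mem_sigma, mem_filter, inv_mul_cancel_right₀ hw0]
    exact ⟨hmul hv hinv, hwU, hw⟩

theorem pow_eq_mul_self_pow_iff [Fintype F] (hq : 0 < q) (hN : N * (q + 1) = (q ^ 2) ^ l - 1)
    (hd : (N + t).Coprime (Fintype.card F - 1)) {z : F} (hz : z ∈ unitCircle F q) :
    z ^ t = (z * z) ^ l ↔ z = 1 := by
  refine ⟨fun h ↦ eq_one_of_pow_eq_one_of_coprime_card_sub_one hd
    (ne_zero_of_mem_nthRootsFinset one_ne_zero hz) ?_, by rintro rfl; simp⟩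
  rw [pow_add, h, pow_mul_mul_self_pow_eq_one hq hN hz]

theorem sum_unitCircleCount [CharP F 2] [Fintype F] (hq : q = 2 ^ m)
    (hN : N * (q + 1) = (q ^ 2) ^ l - 1) (hcard : Fintype.card F = (q ^ 2) ^ l)
    (hd : (N + 2 ^ s).Coprime (Fintype.card F - 1)) :
    ∑ z ∈ unitCircle F q, unitCircleCount q N (2 ^ s) z = q := by
  classical
  have hN' : N * (q + 1) = Fintype.card F - 1 := hcard ▸ hN
  have hq0 : 0 < q := hq ▸ Nat.two_pow_pos m
  have hdiag (z : F) (hz : z ∈ unitCircle F q) : unitCircleCount q N (2 ^ s) z +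
      (if z = 1 then 1 else 0) = #{w ∈ unitCircle F q | w ^ 2 ^ s = (z * w) ^ l} := by
    rw [unitCircleCount_of_mem hq hN (pos_of_mul_eq_card_sub_one hN').1.ne' _ hz, filter_erase,
      card_erase_eq_ite]
    simp only [mem_filter, hz, true_and, pow_eq_mul_self_pow_iff hq0 hN hd hz]
    split_ifs with h1
    · refine Nat.sub_add_cancel (card_pos.2 ⟨z, ?_⟩)
      simp [h1]
    · rfl
  have h := sum_congr rfl hdiag
  rw [sum_add_distrib, sum_ite_eq', if_pos (by simp), sum_card_pow_eq_mul_pow,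
    card_unitCircle hN'] at h
  exact Nat.add_right_cancel h

end Counting

section FourValues

variable {F : Type*} [Field F] [Fintype F] [CharP F 2] {ψ : AddChar F ℤ} {q N l m r s : ℕ}

theorem exists_unitCircleCount_eq_zero (hq : q = 2 ^ m) (hN : N * (q + 1) = (q ^ 2) ^ l - 1)
    (hcard : Fintype.card F = (q ^ 2) ^ l) (hd : (N + 2 ^ s).Coprime (Fintype.card F - 1)) :
    ∃ z ∈ unitCircle F q, unitCircleCount q N (2 ^ s) z = 0 := by
  by_contra! h
  have hle : ∑ _z ∈ unitCircle F q, 1 ≤ ∑ z ∈ unitCircle F q, unitCircleCount q N (2 ^ s) z :=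
    sum_le_sum fun z hz ↦ Nat.one_le_iff_ne_zero.2 (h z hz)
  rw [sum_unitCircleCount hq hN hcard hd, sum_const, card_unitCircle (hcard ▸ hN), smul_eq_mul,
    mul_one] at hle
  exact q.not_succ_le_self hle

theorem two_pow_mod_three_of_coprime (h : (5 + 2 ^ s).Coprime 15) : 2 ^ s % 3 = 2 := by
  have h3 : ¬ 3 ∣ 5 + 2 ^ s := fun hdvd ↦ by
    have := Nat.dvd_gcd hdvd (by norm_num : 3 ∣ 15)
    rw [h] at this
    omega
  have h3' : ¬ 3 ∣ 2 ^ s := fun hdvd ↦ by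
    have := Nat.prime_three.dvd_of_dvd_pow hdvd
    omega
  omega

theorem unitCircleCount_one_eq_two (hcard : Fintype.card F = 16) (hd : (5 + 2 ^ s).Coprime 15) :
    unitCircleCount 2 5 (2 ^ s) (1 : F) = 2 := by
  classical
  have hone : (1 : F) ∈ unitCircle F 2 := by simp
  have hpow (w : F) (hw : w ∈ (unitCircle F 2).erase 1) : w ^ 2 ^ s = (1 * w) ^ 2 := by
    rw [one_mul, pow_eq_pow_mod _ (mem_unitCircle.1 (mem_of_mem_erase hw)),
      two_pow_mod_three_of_coprime hd]
  rw [unitCircleCount_of_mem (pow_one 2).symm (l := 2) rfl (by decide) _ hone,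
    filter_true_of_mem hpow, card_erase_of_mem hone, card_unitCircle (N := 5) (by rw [hcard])]

theorem exists_unitCircleCount_ne (hq : q = 2 ^ m) (hm : m ≠ 0) (hl : l ≠ 0)
    (hN : N * (q + 1) = (q ^ 2) ^ l - 1) (hcard : Fintype.card F = (q ^ 2) ^ l)
    (hr : r * (q + 1) + 1 = q ^ l) (hd : (N + 2 ^ s).Coprime (Fintype.card F - 1)) :
    ∃ z ∈ unitCircle F q,
      unitCircleCount q N (2 ^ s) z ≠ 0 ∧ unitCircleCount q N (2 ^ s) z ≠ r := by
  by_contra! h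
  have hrq : r ∣ q := by
    rw [← sum_unitCircleCount hq hN hcard hd]
    refine dvd_sum fun z hz ↦ ?_
    rcases eq_or_ne (unitCircleCount q N (2 ^ s) z) 0 with h0 | h0
    · exact h0 ▸ dvd_zero r
    · exact (h z hz h0).symm.dvd
  obtain rfl : r = 1 := by
    have := hr ▸ dvd_pow hrq hl
    exact Nat.dvd_one.1 ((Nat.dvd_add_right (dvd_mul_right r _)).1 this)
  obtain rfl : q = 2 := by
    have hq2 : q ∣ 2 := (Nat.dvd_add_right (dvd_refl q)).1
      ((dvd_pow_self q hl).trans (dvd_of_eq (by rw [← hr]; ring)))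
    have : 1 < q := hq ▸ Nat.one_lt_two_pow hm
    exact (Nat.le_of_dvd two_pos hq2).antisymm this
  obtain rfl : l = 2 := Nat.pow_right_injective le_rfl (hr.symm.trans (by norm_num))
  obtain rfl : N = 5 := by omega
  norm_num at hcard
  rw [hcard] at hd
  have h1 := unitCircleCount_one_eq_two hcard hd
  have := h 1 (by simp) (by rw [h1]; decide)
  omega

theorem weilSum_eq (hψ : ψ ≠ 1) (hfrob : ∀ x, ψ (x ^ 2) = ψ x) (hq : q = 2 ^ m) (hm : m ≠ 0)
    (hN : N * (q + 1) = (q ^ 2) ^ l - 1) (hcard : Fintype.card F = (q ^ 2) ^ l)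
    (hr : r * (q + 1) + 1 = q ^ l) (s : ℕ) (z : F) [Decidable (z ∈ unitCircle F q)] :
    weilSum ψ (N + 2 ^ s) z = (q : ℤ) ^ l *
      (1 + (if z ∈ unitCircle F q then (r : ℤ) else 0) - unitCircleCount q N (2 ^ s) z) := by
  have hN' : N * (q + 1) = Fintype.card F - 1 := hcard ▸ hN
  have hcard' : Fintype.card F = (q ^ l) ^ 2 := hcard.trans (pow_right_comm q 2 l)
  have hqN : q - 1 ∣ N := ⟨_, eq_sub_one_mul_geom_sum (hq ▸ Nat.two_pow_pos m) hN⟩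
  have hNr : N = r * (q ^ l + 1) := by
    refine Nat.eq_of_mul_eq_mul_right q.succ_pos ?_
    rw [hN', hcard', ← hr, Nat.succ_eq_add_one]
    exact Nat.sub_eq_of_eq_add (by ring)
  classical
  have hη (u : F) (hu : u ∈ unitCircle F q) :
      gaussPeriod ψ N u = r - if u = 1 then ((q ^ l : ℕ) : ℤ) else 0 := by
    split_ifs with hu1
    · rw [hu1, gaussPeriod_one hψ hfrob hq hm hqN hN' hcard' hr]
    · rw [gaussPeriod_of_ne_one hψ hfrob hq hm hqN hN' hcard' hr hu hu1, sub_zero]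
  rw [weilSum_eq_mul_sub_unitCircleCount hfrob hN' hNr hr hη, Nat.cast_pow]
  congr

theorem sum_unitCircle_weilSum (hψ : ψ ≠ 1) (hfrob : ∀ x, ψ (x ^ 2) = ψ x) (hq : q = 2 ^ m)
    (hm : m ≠ 0) (hN : N * (q + 1) = (q ^ 2) ^ l - 1) (hcard : Fintype.card F = (q ^ 2) ^ l)
    (hr : r * (q + 1) + 1 = q ^ l) (hd : (N + 2 ^ s).Coprime (Fintype.card F - 1)) :
    ∑ z ∈ unitCircle F q, weilSum ψ (N + 2 ^ s) z = Fintype.card F := by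
  classical
  have hW (z : F) (hz : z ∈ unitCircle F q) : weilSum ψ (N + 2 ^ s) z =
      (q : ℤ) ^ l * (1 + r - unitCircleCount q N (2 ^ s) z) := by
    rw [weilSum_eq hψ hfrob hq hm hN hcard hr, if_pos hz]
  have hsum : ∑ z ∈ unitCircle F q, (unitCircleCount q N (2 ^ s) z : ℤ) = q :=
    mod_cast sum_unitCircleCount hq hN hcard hd
  have hr' : (r * (q + 1) + 1 : ℤ) = q ^ l := mod_cast hr
  rw [sum_congr rfl hW, ← mul_sum, sum_sub_distrib, hsum, sum_const, card_unitCircle (hcard ▸ hN),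
    hcard, pow_right_comm, nsmul_eq_mul]
  push_cast
  linear_combination (q : ℤ) ^ l * hr'

theorem le_add_one_of_mul_add_one_eq_pow (hl : 2 ≤ l) (hr : r * (q + 1) + 1 = q ^ l) :
    q ≤ r + 1 := by
  rcases q.eq_zero_or_pos with rfl | hq
  · exact Nat.zero_le _
  have := Nat.pow_le_pow_right hq hl
  by_contra! h
  nlinarith

theorem sum_unitCircle_weilSum_sq_lt (hψ : ψ ≠ 1) (hfrob : ∀ x, ψ (x ^ 2) = ψ x) (hq : q = 2 ^ m)
    (hm : m ≠ 0) (hl : 2 ≤ l) (hN : N * (q + 1) = (q ^ 2) ^ l - 1)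
    (hcard : Fintype.card F = (q ^ 2) ^ l) (hr : r * (q + 1) + 1 = q ^ l)
    (hd : (N + 2 ^ s).Coprime (Fintype.card F - 1)) :
    ∑ z ∈ unitCircle F q, weilSum ψ (N + 2 ^ s) z ^ 2 < (Fintype.card F : ℤ) ^ 2 := by
  classical
  have hq1 : 1 < q := hq ▸ Nat.one_lt_two_pow hm
  have hqr := le_add_one_of_mul_add_one_eq_pow hl hr
  have hbound (z : F) (hz : z ∈ unitCircle F q) : weilSum ψ (N + 2 ^ s) z ^ 2 ≤
      (q : ℤ) ^ l * (1 + r) * weilSum ψ (N + 2 ^ s) z := by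
    have hc : (unitCircleCount q N (2 ^ s) z : ℤ) ≤ r + 1 :=
      mod_cast (unitCircleCount_le hq hN hcard (2 ^ s) hz).trans hqr
    rw [sq, weilSum_eq hψ hfrob hq hm hN hcard hr, if_pos hz]
    have hnonneg : (0 : ℤ) ≤ 1 + r - unitCircleCount q N (2 ^ s) z := by linarith
    gcongr
    linarith [Int.natCast_nonneg (unitCircleCount q N (2 ^ s) z)]
  have hrQ : (1 + r : ℤ) < q ^ l := by
    rw [← Nat.cast_pow, ← hr]
    have : r * 1 < r * (q + 1) := Nat.mul_lt_mul_of_pos_left (by omega) (by omega)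
    exact mod_cast by omega
  calc ∑ z ∈ unitCircle F q, weilSum ψ (N + 2 ^ s) z ^ 2
      ≤ (q : ℤ) ^ l * (1 + r) * Fintype.card F := by
        rw [← sum_unitCircle_weilSum hψ hfrob hq hm hN hcard hr hd, mul_sum]
        exact sum_le_sum hbound
    _ < q ^ l * q ^ l * Fintype.card F := by
        have : 0 < Fintype.card F := Fintype.card_pos
        gcongr
    _ = (Fintype.card F : ℤ) ^ 2 := by
        rw [hcard]
        push_cast
        ring

theorem exists_pos_and_exists_neg_of_sum_sq_lt {ι : Type*} [Fintype ι] {f : ι → ℤ} {S : Finset ι}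
    (hsum : ∑ i ∈ S, f i = ∑ i, f i) (hsq : ∑ i ∈ S, f i ^ 2 < ∑ i, f i ^ 2) :
    (∃ i ∉ S, 0 < f i) ∧ ∃ i ∉ S, f i < 0 := by
  classical
  have hzero : ∑ i ∈ Sᶜ, f i = 0 := by
    have := sum_add_sum_compl S f
    omega
  have hne : ∃ i ∈ Sᶜ, f i ≠ 0 := by
    by_contra! h
    have hcompl : ∑ i ∈ Sᶜ, f i ^ 2 = 0 := sum_eq_zero fun i hi ↦ by rw [h i hi]; rfl
    have := sum_add_sum_compl S fun i ↦ f i ^ 2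
    omega
  obtain ⟨i, hi, hpos⟩ := exists_pos_of_sum_zero_of_exists_nonzero f hzero hne
  obtain ⟨j, hj, hneg⟩ := exists_pos_of_sum_zero_of_exists_nonzero (fun i ↦ -f i)
    (by rw [sum_neg_distrib, hzero, neg_zero]) (by simpa using hne)
  exact ⟨⟨i, mem_compl.1 hi, hpos⟩, j, mem_compl.1 hj, neg_pos.1 hneg⟩

theorem exists_mem_unitCircle_weilSum (hψ : ψ ≠ 1) (hfrob : ∀ x, ψ (x ^ 2) = ψ x) (hq : q = 2 ^ m)
    (hm : m ≠ 0) (hl : 2 ≤ l) (hN : N * (q + 1) = (q ^ 2) ^ l - 1)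
    (hcard : Fintype.card F = (q ^ 2) ^ l) (hr : r * (q + 1) + 1 = q ^ l)
    (hd : (N + 2 ^ s).Coprime (Fintype.card F - 1)) :
    ∃ z₁ ∈ unitCircle F q, ∃ z₂ ∈ unitCircle F q, 0 ≤ weilSum ψ (N + 2 ^ s) z₁ ∧
      weilSum ψ (N + 2 ^ s) z₁ ≠ q ^ l ∧ weilSum ψ (N + 2 ^ s) z₁ ≠ weilSum ψ (N + 2 ^ s) z₂ ∧
      (q : ℤ) ^ l < weilSum ψ (N + 2 ^ s) z₂ := by
  classical
  obtain ⟨z₁, hz₁, hc0, hcr⟩ := exists_unitCircleCount_ne hq hm (by omega) hN hcard hr hd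
  obtain ⟨z₂, hz₂, hc₂⟩ := exists_unitCircleCount_eq_zero hq hN hcard hd
  have hq1 : 1 < q := hq ▸ Nat.one_lt_two_pow hm
  have hqr := le_add_one_of_mul_add_one_eq_pow hl hr
  have hle := unitCircleCount_le hq hN hcard (2 ^ s) hz₁
  have hQ : (0 : ℤ) < q ^ l := by positivity
  refine ⟨z₁, hz₁, z₂, hz₂, ?_⟩
  simp only [weilSum_eq hψ hfrob hq hm hN hcard hr, hz₁, hz₂, hc₂, if_true]
  refine ⟨mul_nonneg hQ.le (by omega), fun h ↦ ?_, fun h ↦ ?_, lt_mul_of_one_lt_right hQ (by omega)⟩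
  · have := (mul_eq_left₀ hQ.ne').1 h
    omega
  · have := mul_left_cancel₀ hQ.ne' h
    omega

theorem exists_notMem_unitCircle_weilSum (hψ : ψ ≠ 1) (hfrob : ∀ x, ψ (x ^ 2) = ψ x)
    (hq : q = 2 ^ m) (hm : m ≠ 0) (hl : 2 ≤ l) (hN : N * (q + 1) = (q ^ 2) ^ l - 1)
    (hcard : Fintype.card F = (q ^ 2) ^ l) (hr : r * (q + 1) + 1 = q ^ l)
    (hd : (N + 2 ^ s).Coprime (Fintype.card F - 1)) :
    (∃ z, weilSum ψ (N + 2 ^ s) z = q ^ l) ∧ ∃ z, weilSum ψ (N + 2 ^ s) z < 0 := by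
  classical
  obtain ⟨⟨z₃, hz₃, hpos⟩, z₄, -, hneg⟩ := exists_pos_and_exists_neg_of_sum_sq_lt
    (f := weilSum ψ (N + 2 ^ s)) (S := unitCircle F q)
    ((sum_unitCircle_weilSum hψ hfrob hq hm hN hcard hr hd).trans
      (sum_weilSum hψ (by positivity)).symm)
    ((sum_unitCircle_weilSum_sq_lt hψ hfrob hq hm hl hN hcard hr hd).trans_eq
      (sum_weilSum_sq hψ _).symm)
  refine ⟨⟨z₃, ?_⟩, z₄, hneg⟩
  rw [weilSum_eq hψ hfrob hq hm hN hcard hr, if_neg hz₃, add_zero] at hpos ⊢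
  have hc : (0 : ℤ) < 1 - unitCircleCount q N (2 ^ s) z₃ :=
    pos_of_mul_pos_right hpos (by positivity)
  rw [(by omega : (1 - unitCircleCount q N (2 ^ s) z₃ : ℤ) = 1), mul_one]

theorem four_le_ncard_weilSum (hψ : ψ ≠ 1) (hfrob : ∀ x, ψ (x ^ 2) = ψ x)
    (hq : q = 2 ^ m) (hm : m ≠ 0) (hl : 2 ≤ l) (hN : N * (q + 1) = (q ^ 2) ^ l - 1)
    (hcard : Fintype.card F = (q ^ 2) ^ l) (hr : r * (q + 1) + 1 = q ^ l)
    (hd : (N + 2 ^ s).Coprime (Fintype.card F - 1)) :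
    4 ≤ {v : ℤ | ∃ z : F, z ≠ 0 ∧ weilSum ψ (N + 2 ^ s) z = v}.ncard := by
  obtain ⟨z₁, hz₁, z₂, hz₂, h₁, h₁₃, h₁₂, h₂⟩ :=
    exists_mem_unitCircle_weilSum hψ hfrob hq hm hl hN hcard hr hd
  obtain ⟨⟨z₃, h₃⟩, z₄, h₄⟩ := exists_notMem_unitCircle_weilSum hψ hfrob hq hm hl hN hcard hr hd
  have hQ : (0 : ℤ) < q ^ l := pow_pos (mod_cast hq ▸ Nat.two_pow_pos m) l
  have hzero : weilSum ψ (N + 2 ^ s) 0 = 0 := weilSum_zero hψ (by positivity) hd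
  have hz₃ : z₃ ≠ 0 := by rintro rfl; omega
  have hz₄ : z₄ ≠ 0 := by rintro rfl; omega
  have hne {z : F} (hz : z ∈ unitCircle F q) : z ≠ 0 :=
    ne_zero_of_mem_nthRootsFinset one_ne_zero hz
  have hcard4 : #{weilSum ψ (N + 2 ^ s) z₁, weilSum ψ (N + 2 ^ s) z₂, weilSum ψ (N + 2 ^ s) z₃,
      weilSum ψ (N + 2 ^ s) z₄} = 4 := by
    rw [card_insert_of_notMem, card_insert_of_notMem, card_pair] <;>
      simp only [mem_insert, mem_singleton, ne_eq] <;> omega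
  rw [← hcard4, ← Set.ncard_coe_finset]
  refine Set.ncard_le_ncard ?_ ((Set.finite_range (weilSum ψ (N + 2 ^ s))).subset ?_)
  · simp only [coe_insert, coe_singleton, Set.insert_subset_iff, Set.singleton_subset_iff]
    exact ⟨⟨z₁, hne hz₁, rfl⟩, ⟨z₂, hne hz₂, rfl⟩, ⟨z₃, hz₃, rfl⟩, z₄, hz₄, rfl⟩
  · rintro v ⟨z, -, rfl⟩
    exact ⟨z, rfl⟩

end FourValues

section TraceChar

variable (F : Type*) [Field F] [Algebra (ZMod 2) F]

/-- The canonical additive character `x ↦ (-1) ^ Tr x` of a finite field of characteristic two,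
where `Tr` is the absolute trace. -/
noncomputable def traceChar : AddChar F ℤ :=
  (AddChar.zmodChar 2 neg_one_sq).compAddMonoidHom (Algebra.trace (ZMod 2) F).toAddMonoidHom

variable {F}

theorem traceChar_apply (x : F) : traceChar F x = (-1) ^ (Algebra.trace (ZMod 2) F x).val :=
  rfl

variable [Finite F]

theorem traceChar_ne_one : traceChar F ≠ 1 := by
  obtain ⟨x, hx⟩ := Algebra.trace_surjective (ZMod 2) F 1
  refine AddChar.ne_one_iff.2 ⟨x, ?_⟩
  rw [traceChar_apply, hx]
  decide

theorem traceChar_sq (x : F) : traceChar F (x ^ 2) = traceChar F x := by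
  have h := Algebra.trace_eq_of_algEquiv (FiniteField.frobeniusAlgEquivOfAlgebraic (ZMod 2) F) x
  rw [FiniteField.coe_frobeniusAlgEquivOfAlgebraic, ZMod.card] at h
  rw [traceChar_apply, traceChar_apply, h]

end TraceChar

theorem add_one_dvd_pow_sub_one {l : ℕ} (q : ℕ) (hl : Even l) : q + 1 ∣ q ^ l - 1 := by
  obtain ⟨k, rfl⟩ := hl
  have h := Nat.sub_dvd_pow_sub_pow (q ^ 2) 1 k
  rw [one_pow, ← pow_mul, two_mul] at h
  exact (Dvd.intro (q - 1) (Nat.sq_sub_sq q 1).symm).trans h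

theorem weil_sum_at_least_four_values_general {F : Type*} [Field F] [Fintype F] {ψ : AddChar F ℤ}
    (hψ : ψ ≠ 1) (hfrob : ∀ x, ψ (x ^ 2) = ψ x) {m l : ℕ} (hm : m ≠ 0) (hl : 2 ≤ l) (hle : Even l)
    (hcard : Fintype.card F = 2 ^ (2 * l * m)) (s : ℕ)
    (hd : ((2 ^ (2 * l * m) - 1) / (2 ^ m + 1) + 2 ^ s).Coprime (2 ^ (2 * l * m) - 1)) :
    4 ≤ {v : ℤ | ∃ z : F, z ≠ 0 ∧
      weilSum ψ ((2 ^ (2 * l * m) - 1) / (2 ^ m + 1) + 2 ^ s) z = v}.ncard := by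
  have hpow : 2 ^ (2 * l * m) = ((2 ^ m) ^ 2) ^ l := by ring
  have : CharP F 2 := charP_of_card_eq_prime_pow hcard
  obtain ⟨r, hr⟩ := add_one_dvd_pow_sub_one (2 ^ m) hle
  have hN : (2 ^ (2 * l * m) - 1) / (2 ^ m + 1) * (2 ^ m + 1) = ((2 ^ m) ^ 2) ^ l - 1 := by
    rw [hpow, Nat.div_mul_cancel]
    exact pow_mul (2 ^ m) 2 l ▸ add_one_dvd_pow_sub_one _ (even_two.mul_right l)
  refine four_le_ncard_weilSum hψ hfrob rfl hm hl hN (hcard.trans hpow) (r := r) ?_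
    (by rwa [hcard])
  rw [mul_comm, ← hr, Nat.sub_add_cancel (Nat.one_le_pow _ _ (Nat.two_pow_pos m))]

/-- For `d = (2^(2lm)-1)/(2^m+1) + 2^s` with `l ≥ 2` even and
`gcd(d, 2^(2lm)-1) = 1`, the Weil sum `S_d` takes at least four distinct values
on the nonzero elements of `GF(2^(2lm))`. -/
theorem weil_sum_at_least_four_values (m l s d : ℕ) (hm : 1 ≤ m) (hl : 2 ≤ l)
    (hle : Even l) (hs : s ≤ 2 * m - 1)
    (hd : d = (2 ^ (2 * l * m) - 1) / (2 ^ m + 1) + 2 ^ s)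
    (hgcd : Nat.gcd d (2 ^ (2 * l * m) - 1) = 1) :
    4 ≤ Set.ncard {v : ℤ | ∃ z : GaloisField 2 (2 * l * m),
      z ≠ 0 ∧ binaryWeilSum (2 * l * m) d z = v} := by
  subst hd
  have hcard : Fintype.card (GaloisField 2 (2 * l * m)) = 2 ^ (2 * l * m) := by
    rw [← Nat.card_eq_fintype_card, GaloisField.card 2 _ (by positivity)]
  exact weil_sum_at_least_four_values_general traceChar_ne_one traceChar_sq
    (Nat.one_le_iff_ne_zero.1 hm) hl hle hcard s hgcd
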